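/- Let θ be a surjective bounded (complex-)linear map from a C*-algebra A onto a C*-algebra B such that θ(a)θ(b) = 0 for all a, b in A with ab = 0. Then, regarding B as embedded in its multiplier algebra M(B), there exist an element h of M(B) which is central in M(B) and invertible in M(B), and a surjective (complex-)algebra homomorphism φ : A → B, such that θ(a) = h·φ(a) in M(B) for every a in A. -/

import Mathlib

/-!
Two facts carry the proof.

* `map_mul_mul_map`: a bounded zero product preserving `θ` satisfies
  `θ (a b) θ c = θ a θ (b c)`. This follows from `apply_one_eq_one_apply`: on a unital C⋆-algebra
  `M` (here `M(A)`), a bounded bilinear `ψ` vanishing on pairs with `x y = 0` satisfies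
  `ψ x 1 = ψ 1 x`. For self-adjoint `y`, write `y` up to a scalar as a sum of ramps
  `t ↦ max 0 (min 1 (t - c - k))` in the functional calculus. Since `ψ` kills disjointly supported
  pairs, `ψ y 1 - ψ 1 y` becomes a sum of values at neighbouring hat functions, and grouping these
  by residues modulo `3` bounds it by `6 ‖ψ‖`, independently of `y`. Replacing `y` by `n y` shows
  that it is zero.

* `exists_operator`: the multiplier `h` is the operator `T` on `B` with `T (θ (a b)) = θ a θ b`.
  The shift identity gives `θ a θ b θ (z w) = θ (a b) θ z θ w`, so `T x` is the unique `y` with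
  `y θ (z w) = x θ z θ w`; existence and uniqueness hold because products span `A` and `B` is
  faithful on itself. Uniqueness makes `T` linear, the closed graph theorem makes it bounded, and
  `T x * y = x * T y` makes `(T, T)` a central double centralizer. It is onto because products span
  `B`, and then injective by the same symmetry.

Finally `φ = T⁻¹ ∘ θ`, multiplicative because `T⁻¹ (θ a) T⁻¹ (θ b) = T⁻¹ (T⁻¹ (θ a θ b))`.
-/

open scoped MultiplierAlgebra

/-! ### Ramps and hats -/

/-- The ramp `t ↦ max 0 (min 1 (t - c))`: zero up to `c`, one from `c + 1` on. -/
noncomputable def ramp (c : ℝ) : C(ℝ, ℝ) := ⟨fun t => max 0 (min 1 (t - c)), by fun_prop⟩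

/-- The hat function supported on `[c, c + 2]`. -/
noncomputable def hat (c : ℝ) : C(ℝ, ℝ) := ramp c - ramp (c + 1)

lemma ramp_apply (c t : ℝ) : ramp c t = max 0 (min 1 (t - c)) := rfl

lemma hat_apply (c t : ℝ) : hat c t = ramp c t - ramp (c + 1) t := rfl

lemma ramp_nonneg (c t : ℝ) : 0 ≤ ramp c t := le_max_left _ _

lemma ramp_le_one (c t : ℝ) : ramp c t ≤ 1 := by
  rw [ramp_apply]; exact max_le zero_le_one (min_le_left _ _)

lemma ramp_eq_zero {c t : ℝ} (h : t ≤ c) : ramp c t = 0 := by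
  rw [ramp_apply, min_eq_right (by linarith), max_eq_left (by linarith)]

lemma ramp_eq_one {c t : ℝ} (h : c + 1 ≤ t) : ramp c t = 1 := by
  rw [ramp_apply, min_eq_left (by linarith), max_eq_right (by linarith)]

lemma hat_nonneg (c t : ℝ) : 0 ≤ hat c t := by
  rw [hat_apply, ramp_apply, ramp_apply, sub_nonneg]
  gcongr
  linarith

lemma hat_eq_zero {c t : ℝ} (h : t ≤ c ∨ c + 2 ≤ t) : hat c t = 0 := by
  rw [hat_apply]
  rcases h with h | h
  · rw [ramp_eq_zero h, ramp_eq_zero (by linarith), sub_zero]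
  · rw [ramp_eq_one (by linarith), ramp_eq_one (by linarith), sub_self]

lemma hat_mul_hat {c d : ℝ} (h : c + 2 ≤ d ∨ d + 2 ≤ c) : hat c * hat d = 0 := by
  ext t
  simp only [ContinuousMap.mul_apply, ContinuousMap.zero_apply, mul_eq_zero]
  rcases h with h | h
  · rcases le_total t d with ht | ht
    · exact .inr (hat_eq_zero (.inl ht))
    · exact .inl (hat_eq_zero (.inr (by linarith)))
  · rcases le_total t c with ht | ht
    · exact .inl (hat_eq_zero (.inl ht))
    · exact .inr (hat_eq_zero (.inr (by linarith)))

lemma ramp_mul_one_sub {c d : ℝ} (h : d + 1 ≤ c) : ramp c * (1 - ramp d) = 0 := by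
  ext t
  simp only [ContinuousMap.mul_apply, ContinuousMap.zero_apply, mul_eq_zero,
    ContinuousMap.sub_apply, ContinuousMap.one_apply]
  rcases le_total t c with ht | ht
  · exact .inl (ramp_eq_zero ht)
  · exact .inr (by rw [ramp_eq_one (by linarith), sub_self])

/-- The hat functions with nodes `c, c + 1, …` telescope, so that any partial sum of them takes
values in `[0, 1]`. -/
lemma abs_sum_hat_le (c : ℝ) (n : ℕ) (S : Finset ℕ) (hS : S ⊆ Finset.range n) (t : ℝ) :
    |(∑ k ∈ S, hat (c + k)) t| ≤ 1 := by
  rw [ContinuousMap.sum_apply, abs_of_nonneg (Finset.sum_nonneg fun _ _ => hat_nonneg _ _)]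
  calc ∑ k ∈ S, hat (c + k) t ≤ ∑ k ∈ Finset.range n, hat (c + k) t :=
        Finset.sum_le_sum_of_subset_of_nonneg hS fun _ _ _ => hat_nonneg _ _
    _ = ramp (c + (0 : ℕ)) t - ramp (c + n) t := by
        rw [← Finset.sum_range_sub' (fun k : ℕ => ramp (c + k) t)]
        refine Finset.sum_congr rfl fun k _ => ?_
        rw [hat_apply]; push_cast; rw [add_assoc]
    _ ≤ 1 := by linarith [ramp_le_one (c + (0 : ℕ)) t, ramp_nonneg (c + n) t]

lemma sum_ramp_apply (c : ℝ) (n : ℕ) (t : ℝ) (h₁ : c ≤ t) (h₂ : t ≤ c + n) :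
    (∑ k ∈ Finset.range n, ramp (c + k)) t = t - c := by
  have key : ∀ n : ℕ, (∑ k ∈ Finset.range n, ramp (c + k)) t = min (n : ℝ) (t - c) := by
    intro n
    induction n with
    | zero => simp [h₁]
    | succ m ih =>
      rw [Finset.sum_range_succ, ContinuousMap.add_apply, ih]
      push_cast
      rcases le_total t (c + m) with h | h
      · rw [ramp_eq_zero h, min_eq_right (by linarith), min_eq_right (by linarith), add_zero]
      · rcases le_total (c + m + 1) t with h' | h'
        · rw [ramp_eq_one h', min_eq_left (by linarith), min_eq_left (by linarith)]
        · rw [ramp_apply, min_eq_left (by linarith), min_eq_right (by linarith),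
            max_eq_right (by linarith), min_eq_right (by linarith)]
          ring
  rw [key, min_eq_right (by linarith)]

/-! ### Bilinear maps on `C(ℝ, ℝ)` that kill disjointly supported pairs -/

section Bilinear

variable {B : Type*} [NormedAddCommGroup B] [NormedSpace ℝ B]

/-- Neighbouring hats do not annihilate each other, but hats whose indices agree modulo `3` do
not interact, so each residue class collapses to one value of `V` at functions bounded by `1`.
Hence the bound does not depend on the number of hats. -/
lemma norm_sum_hat_le (V : C(ℝ, ℝ) →ₗ[ℝ] C(ℝ, ℝ) →ₗ[ℝ] B) (hV : ∀ f g, f * g = 0 → V f g = 0)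
    (C : ℝ) (hC : ∀ f g : C(ℝ, ℝ), (∀ t, |f t| ≤ 1) → (∀ t, |g t| ≤ 1) → ‖V f g‖ ≤ C)
    (c : ℝ) (n : ℕ) :
    ‖∑ k ∈ Finset.range n, V (hat (c + k)) (hat (c - 1 + k))‖ ≤ 3 * C := by
  have hmaps : ∀ k ∈ Finset.range n, k % 3 ∈ Finset.range 3 := fun k _ =>
    Finset.mem_range.2 (Nat.mod_lt _ (by norm_num))
  rw [← Finset.sum_fiberwise_of_maps_to hmaps]
  refine (norm_sum_le _ _).trans ((Finset.sum_le_sum (g := fun _ => C) fun r _ => ?_).trans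
    (by simp))
  set S := (Finset.range n).filter fun k => k % 3 = r with hS
  have hsub : S ⊆ Finset.range n := Finset.filter_subset _ _
  have : ∑ k ∈ S, V (hat (c + k)) (hat (c - 1 + k))
      = V (∑ k ∈ S, hat (c + k)) (∑ j ∈ S, hat (c - 1 + j)) := by
    rw [map_sum V, LinearMap.sum_apply]
    refine Finset.sum_congr rfl fun k hk => ?_
    rw [map_sum, Finset.sum_eq_single_of_mem k hk]
    intro j hj hjk
    apply hV
    apply hat_mul_hat
    have h1 : k % 3 = r := (Finset.mem_filter.1 hk).2
    have h2 : j % 3 = r := (Finset.mem_filter.1 hj).2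
    rcases (by omega : k + 3 ≤ j ∨ j + 3 ≤ k) with h | h
    · left
      have : (k : ℝ) + 3 ≤ j := by exact_mod_cast h
      linarith
    · right
      have : (j : ℝ) + 3 ≤ k := by exact_mod_cast h
      linarith
  rw [this]
  exact hC _ _ (abs_sum_hat_le c n S hsub) (abs_sum_hat_le (c - 1) n S hsub)

/-- With `u, v, w` the ramps at `c - 1, c, c + 1`, this expands `V (v - w) (u - v)` using
`v (1 - u) = w (1 - u) = w (1 - v) = 0`. -/
lemma apply_hat_hat (V : C(ℝ, ℝ) →ₗ[ℝ] C(ℝ, ℝ) →ₗ[ℝ] B) (hV : ∀ f g, f * g = 0 → V f g = 0)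
    (c : ℝ) : V (hat c) (hat (c - 1)) = V (ramp c) 1 - V (ramp c) (ramp c) := by
  have h1 := hV _ _ (ramp_mul_one_sub (show c - 1 + 1 ≤ c by linarith))
  have h2 := hV _ _ (ramp_mul_one_sub (show c - 1 + 1 ≤ c + 1 by linarith))
  have h3 := hV _ _ (ramp_mul_one_sub (show c + 1 ≤ c + 1 by linarith))
  simp only [hat, map_sub, LinearMap.sub_apply, sub_add_cancel] at h1 h2 h3 ⊢
  rw [← sub_eq_zero.1 h1, ← sub_eq_zero.1 h2, ← sub_eq_zero.1 h3]
  abel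

lemma norm_sum_ramp_le (V : C(ℝ, ℝ) →ₗ[ℝ] C(ℝ, ℝ) →ₗ[ℝ] B) (hV : ∀ f g, f * g = 0 → V f g = 0)
    (C : ℝ) (hC : ∀ f g : C(ℝ, ℝ), (∀ t, |f t| ≤ 1) → (∀ t, |g t| ≤ 1) → ‖V f g‖ ≤ C)
    (c : ℝ) (n : ℕ) :
    ‖V (∑ k ∈ Finset.range n, ramp (c + k)) 1 - V 1 (∑ k ∈ Finset.range n, ramp (c + k))‖
      ≤ 6 * C := by
  have hV' : ∀ f g, f * g = 0 → V.flip f g = 0 := fun f g h => hV g f (by rw [mul_comm, h])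
  have e : V (∑ k ∈ Finset.range n, ramp (c + k)) 1 - V 1 (∑ k ∈ Finset.range n, ramp (c + k))
      = ∑ k ∈ Finset.range n, V (hat (c + k)) (hat (c - 1 + k))
        - ∑ k ∈ Finset.range n, V.flip (hat (c + k)) (hat (c - 1 + k)) := by
    rw [map_sum, map_sum, LinearMap.sum_apply, ← Finset.sum_sub_distrib,
      ← Finset.sum_sub_distrib]
    refine Finset.sum_congr rfl fun k _ => ?_
    rw [sub_add_eq_add_sub, apply_hat_hat V hV, apply_hat_hat V.flip hV']
    simp only [LinearMap.flip_apply]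
    abel
  rw [e]
  have h1 := norm_sum_hat_le V hV C hC c n
  have h2 := norm_sum_hat_le V.flip hV' C (fun f g hf hg => hC g f hg hf) c n
  linarith [norm_sub_le (∑ k ∈ Finset.range n, V (hat (c + k)) (hat (c - 1 + k)))
    (∑ k ∈ Finset.range n, V.flip (hat (c + k)) (hat (c - 1 + k)))]

end Bilinear

/-! ### Zero product determination -/

section ZeroProductDetermined

variable {M B : Type*} [CStarAlgebra M] [NormedAddCommGroup B] [NormedSpace ℂ B]

/-- The bound does not involve `y`; applied to all multiples of `y` it forces the left-hand side
to vanish. -/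
lemma norm_sub_le_of_isSelfAdjoint (ψ : M →L[ℂ] M →L[ℂ] B)
    (hψ : ∀ x y, x * y = 0 → ψ x y = 0) (y : M) (hy : IsSelfAdjoint y) :
    ‖ψ y 1 - ψ 1 y‖ ≤ 6 * ‖ψ‖ := by
  -- The functional calculus of `y`, precomposed with restriction to the spectrum.
  let ρ : C(ℝ, ℝ) →⋆ₐ[ℝ] M := (cfcHom (R := ℝ) hy).comp
    (ContinuousMap.compStarAlgHom' ℝ ℝ ⟨((↑) : spectrum ℝ y → ℝ), continuous_subtype_val⟩)
  have hρ : ∀ f, ρ f = cfcHom (R := ℝ) hy (f.comp ⟨(↑), continuous_subtype_val⟩) := fun _ => rfl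
  have hρn : ∀ f : C(ℝ, ℝ), (∀ t, |f t| ≤ 1) → ‖ρ f‖ ≤ 1 := by
    intro f hf
    rw [hρ, norm_cfcHom (𝕜 := ℝ) y]
    exact (ContinuousMap.norm_le _ zero_le_one).2 fun t => hf t
  let V : C(ℝ, ℝ) →ₗ[ℝ] C(ℝ, ℝ) →ₗ[ℝ] B := LinearMap.mk₂ ℝ (fun f g => ψ (ρ f) (ρ g))
    (by intros; simp) (by intros; simp [ContinuousLinearMap.map_smul_of_tower])
    (by intros; simp) (by intros; simp [ContinuousLinearMap.map_smul_of_tower])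
  have hV : ∀ f g, V f g = ψ (ρ f) (ρ g) := fun _ _ => rfl
  obtain ⟨N, hN⟩ := exists_nat_ge ‖y‖
  have hsum : ρ (∑ k ∈ Finset.range (2 * N), ramp (-N + k)) = y + (N : ℂ) • 1 := by
    have : (∑ k ∈ Finset.range (2 * N), ramp (-N + k)).comp
        (⟨(↑), continuous_subtype_val⟩ : C(spectrum ℝ y, ℝ))
        = (ContinuousMap.id ℝ).restrict (spectrum ℝ y) + (N : ℝ) • 1 := by
      ext t
      have ht : |(t : ℝ)| ≤ N := by
        rcases subsingleton_or_nontrivial M with hM | hM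
        · exact absurd t.2 (by simp [spectrum.of_subsingleton])
        · exact (spectrum.norm_le_norm_of_mem t.2).trans hN
      rw [abs_le] at ht
      have := sum_ramp_apply (-N) (2 * N) t ht.1 (by push_cast; linarith)
      refine this.trans ?_
      simp
    rw [hρ, this, map_add, cfcHom_id, map_smul, map_one]
    simp [Nat.cast_smul_eq_nsmul]
  have := norm_sum_ramp_le V (fun f g h => hψ _ _ (by rw [← map_mul, h, map_zero])) ‖ψ‖
    (fun f g hf hg => ?_) (-N) (2 * N)
  · rw [hV, hV, map_one, hsum] at this
    simpa using this
  · calc ‖V f g‖ ≤ ‖ψ‖ * ‖ρ f‖ * ‖ρ g‖ := ψ.le_opNorm₂ _ _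
      _ ≤ ‖ψ‖ * 1 * 1 := by gcongr <;> [exact hρn f hf; exact hρn g hg]
      _ = ‖ψ‖ := by ring

/-- Unital C⋆-algebras are zero product determined. -/
lemma apply_one_eq_one_apply (ψ : M →L[ℂ] M →L[ℂ] B)
    (hψ : ∀ x y, x * y = 0 → ψ x y = 0) (x : M) : ψ x 1 = ψ 1 x := by
  have hsa : ∀ y : M, IsSelfAdjoint y → ψ y 1 = ψ 1 y := by
    intro y hy
    rw [← sub_eq_zero, ← norm_le_zero_iff]
    by_contra! hpos
    obtain ⟨n, hn⟩ := exists_nat_gt (6 * ‖ψ‖ / ‖ψ y 1 - ψ 1 y‖)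
    rw [div_lt_iff₀ hpos] at hn
    have h := norm_sub_le_of_isSelfAdjoint ψ hψ ((n : ℝ) • y) ((IsSelfAdjoint.all (n : ℝ)).smul hy)
    rw [ψ.map_smul_of_tower, (ψ 1).map_smul_of_tower, smul_apply, ← smul_sub, norm_smul,
      Real.norm_natCast] at h
    linarith
  rw [← realPart_add_I_smul_imaginaryPart x]
  simp only [map_add, map_smul, add_apply, smul_apply]
  rw [hsa _ (realPart x).2, hsa _ (imaginaryPart x).2]

end ZeroProductDetermined

/-! ### The central multiplier -/

section DoubleCentralizer

variable {A B : Type*} [NonUnitalCStarAlgebra A] [NonUnitalCStarAlgebra B]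

/-- A zero product preserving map can shift a middle factor between its two arguments: the
bilinear map `(x, y) ↦ θ (a x) θ (y c)` on the multiplier algebra kills zero products. -/
lemma map_mul_mul_map (θ : A →L[ℂ] B) (hθ : ∀ a b : A, a * b = 0 → θ a * θ b = 0) (a b c : A) :
    θ (a * b) * θ c = θ a * θ (b * c) := by
  let S : 𝓜(ℂ, A) →L[ℂ] B := LinearMap.mkContinuous
    { toFun := fun x => θ (x.snd a), map_add' := by intros; simp,
      map_smul' := by intros; simp } (‖θ‖ * ‖a‖) (by
        intro x
        calc ‖θ (x.snd a)‖ ≤ ‖θ‖ * (‖x.snd‖ * ‖a‖) :=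
              (θ.le_opNorm _).trans (by gcongr; exact x.snd.le_opNorm a)
          _ = ‖θ‖ * ‖a‖ * ‖x‖ := by rw [DoubleCentralizer.norm_snd]; ring)
  let T : 𝓜(ℂ, A) →L[ℂ] B := LinearMap.mkContinuous
    { toFun := fun x => θ (x.fst c), map_add' := by intros; simp,
      map_smul' := by intros; simp } (‖θ‖ * ‖c‖) (by
        intro x
        calc ‖θ (x.fst c)‖ ≤ ‖θ‖ * (‖x.fst‖ * ‖c‖) :=
              (θ.le_opNorm _).trans (by gcongr; exact x.fst.le_opNorm c)
          _ = ‖θ‖ * ‖c‖ * ‖x‖ := by rw [DoubleCentralizer.norm_fst]; ring)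
  let ψ : 𝓜(ℂ, A) →L[ℂ] 𝓜(ℂ, A) →L[ℂ] B := (ContinuousLinearMap.mul ℂ B).bilinearComp S T
  have hψ : ∀ x y, ψ x y = θ (x.snd a) * θ (y.fst c) := fun _ _ => rfl
  have := apply_one_eq_one_apply ψ (fun x y hxy => ?_) (b : 𝓜(ℂ, A))
  · simpa [hψ, DoubleCentralizer.coe_fst, DoubleCentralizer.coe_snd] using this
  · rw [hψ]
    apply hθ
    rw [x.central]
    have : x.fst (y.fst c) = (x * y).fst c := rfl
    rw [this, hxy]
    simp

/-- Products span a C⋆-algebra, because every element is a combination of positive ones and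
positive elements are squares. -/
lemma mem_of_forall_mul_mem (p : Submodule ℂ A) (hp : ∀ a b : A, a * b ∈ p) (x : A) : x ∈ p := by
  let _ := CStarAlgebra.spectralOrder A
  have := CStarAlgebra.spectralOrderedRing A
  have h : Submodule.span ℂ {a : A | 0 ≤ a} ≤ p := Submodule.span_le.2 fun a ha => by
    rw [← CFC.sqrt_mul_sqrt_self a ha]
    exact hp _ _
  rw [CStarAlgebra.span_nonneg] at h
  exact h trivial

lemma eq_of_forall_mul_eq {u v : B} (h : ∀ y, u * y = v * y) : u = v := by
  rw [← sub_eq_zero, ← CStarRing.mul_star_self_eq_zero_iff, sub_mul, h, sub_self]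

/-- A bounded operator `T` with `T x * y = x * T y`, viewed as the multiplier acting by `T` on
both sides. -/
def ofCentral (T : B →L[ℂ] B) (hT : ∀ x y, T x * y = x * T y) : 𝓜(ℂ, B) where
  fst := T
  snd := T
  central := hT

lemma map_mul_of_central {T : B → B} (hT : ∀ x y, T x * y = x * T y) (x y : B) :
    T (x * y) = T x * y :=
  eq_of_forall_mul_eq fun z => by rw [hT, mul_assoc, ← hT y z, ← mul_assoc, ← hT, mul_assoc]

lemma fst_mul (m : 𝓜(ℂ, B)) (x y : B) : m.fst (x * y) = m.fst x * y := by
  have key : ∀ z, z * m.fst (x * y) = z * (m.fst x * y) := fun z => by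
    rw [← m.central, ← mul_assoc, m.central, mul_assoc]
  rw [← sub_eq_zero, ← CStarRing.star_mul_self_eq_zero_iff, mul_sub, key, sub_self]

lemma ext_fst {m n : 𝓜(ℂ, B)} (h : ∀ x, m.fst x = n.fst x) : m = n := by
  refine DoubleCentralizer.ext _ _ _ _ (Prod.ext (ContinuousLinearMap.ext h)
    (ContinuousLinearMap.ext fun x => eq_of_forall_mul_eq fun y => ?_))
  exact (m.central x y).trans ((congrArg (x * ·) (h y)).trans (n.central x y).symm)

lemma ofCentral_mul_comm (T : B →L[ℂ] B) (hT : ∀ x y, T x * y = x * T y) (m : 𝓜(ℂ, B)) :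
    ofCentral T hT * m = m * ofCentral T hT := by
  refine ext_fst fun x => ?_
  change T (m.fst x) = m.fst (T x)
  refine eq_of_forall_mul_eq fun y => ?_
  rw [hT, ← fst_mul, ← hT, fst_mul]

/-- The operator of multiplication by the multiplier `h`, which plays the role of `θ 1`. It is
characterised by `T x * θ (z w) = x * θ z * θ w`. -/
lemma exists_operator (θ : A →L[ℂ] B) (hsurj : Function.Surjective θ)
    (hθ : ∀ a b : A, a * b = 0 → θ a * θ b = 0) :
    ∃ T : B →L[ℂ] B, (∀ x y, T x * y = x * T y) ∧ Function.Bijective T ∧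
      ∀ a b, T (θ (a * b)) = θ a * θ b := by
  have hs := map_mul_mul_map θ hθ
  -- An element of `B` is determined by its products with `θ (z * w)`.
  have faith : ∀ u v : B, (∀ z w, u * θ (z * w) = v * θ (z * w)) → u = v := by
    intro u v h
    refine eq_of_forall_mul_eq fun y => ?_
    obtain ⟨d, rfl⟩ := hsurj y
    let p : Submodule ℂ A :=
      { carrier := {d | u * θ d = v * θ d}
        add_mem' := fun {a b} ha hb => by
          simp only [Set.mem_ofPred_eq, map_add, mul_add] at *; rw [ha, hb]
        zero_mem' := by simp
        smul_mem' := fun r a ha => by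
          simp only [Set.mem_ofPred_eq, map_smul, mul_smul_comm] at *; rw [ha] }
    exact mem_of_forall_mul_mem p h d
  have hprod : ∀ a b z w, θ a * θ b * θ (z * w) = θ (a * b) * θ z * θ w := fun a b z w => by
    rw [mul_assoc, ← hs b z w, ← mul_assoc, ← hs a b z]
  have ex : ∀ x : B, ∃ y : B, ∀ z w, y * θ (z * w) = x * θ z * θ w := by
    intro x
    obtain ⟨d, rfl⟩ := hsurj x
    let p : Submodule ℂ A :=
      { carrier := {d | ∃ y : B, ∀ z w, y * θ (z * w) = θ d * θ z * θ w}
        add_mem' := by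
          rintro a b ⟨y, hy⟩ ⟨y', hy'⟩
          exact ⟨y + y', fun z w => by rw [add_mul, hy, hy', map_add, add_mul, add_mul]⟩
        zero_mem' := ⟨0, by simp⟩
        smul_mem' := by
          rintro r a ⟨y, hy⟩
          exact ⟨r • y, fun z w => by
            rw [smul_mul_assoc, hy, map_smul, smul_mul_assoc, smul_mul_assoc]⟩ }
    exact mem_of_forall_mul_mem p (fun a b => ⟨θ a * θ b, hprod a b⟩) d
  choose H hH using ex
  let L : B →ₗ[ℂ] B :=
    { toFun := H
      map_add' := fun x y => faith _ _ fun z w => by simp only [add_mul, hH]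
      map_smul' := fun r x => faith _ _ fun z w => by
        simp only [RingHom.id_apply, smul_mul_assoc, hH] }
  have hL : ∀ x z w, L x * θ (z * w) = x * θ z * θ w := hH
  have hLprod : ∀ a b, L (θ (a * b)) = θ a * θ b := fun a b =>
    faith _ _ fun z w => by rw [hL, hprod]
  have hcont : Continuous L := L.continuous_of_seq_closed_graph fun u x y hu hLu =>
    faith _ _ fun z w => by
      rw [hL]
      refine tendsto_nhds_unique (hLu.mul_const (θ (z * w))) ?_
      simp only [Function.comp_apply, hL]
      exact (hu.mul_const _).mul_const _
  have hcen : ∀ x y, L x * y = x * L y := by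
    intro x y
    obtain ⟨d, rfl⟩ := hsurj y
    let p : Submodule ℂ A :=
      { carrier := {d | L x * θ d = x * L (θ d)}
        add_mem' := fun {a b} ha hb => by
          simp only [Set.mem_ofPred_eq, map_add, mul_add] at *; rw [ha, hb]
        zero_mem' := by simp
        smul_mem' := fun r a ha => by
          simp only [Set.mem_ofPred_eq, map_smul, mul_smul_comm] at *; rw [ha] }
    refine mem_of_forall_mul_mem p (fun a b => ?_) d
    change L x * θ (a * b) = x * L (θ (a * b))
    rw [hL, hLprod, mul_assoc]
  have hLsurj : Function.Surjective L := by
    intro x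
    refine mem_of_forall_mul_mem (LinearMap.range L) (fun a b => ?_) x
    obtain ⟨a, rfl⟩ := hsurj a
    obtain ⟨b, rfl⟩ := hsurj b
    exact ⟨_, hLprod a b⟩
  refine ⟨⟨L, hcont⟩, hcen, ⟨?_, hLsurj⟩, hLprod⟩
  intro x x' hx
  change L x = L x' at hx
  refine eq_of_forall_mul_eq fun y => ?_
  obtain ⟨y, rfl⟩ := hLsurj y
  rw [← hcen, hx, hcen]

end DoubleCentralizer

/-- Let `θ` be a surjective bounded linear map from a C*-algebra `A`
onto a C*-algebra `B` (neither necessarily unital) which preserves zero products: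
`a * b = 0` implies `θ a * θ b = 0`.  Then, regarding `B` inside its multiplier algebra
`M(B) = 𝓜(ℂ, B)`, there are a central invertible element `h` of `M(B)` and a surjective
algebra homomorphism `φ : A → B` with `θ a = h * φ a` in `M(B)` for all `a`. -/
theorem zpp_surjective_factors_hom
    {A B : Type*} [NonUnitalCStarAlgebra A] [NonUnitalCStarAlgebra B]
    (θ : A →L[ℂ] B) (hsurj : Function.Surjective θ)
    (hθ : ∀ a b : A, a * b = 0 → θ a * θ b = 0) :
    ∃ h : 𝓜(ℂ, B), (∀ m : 𝓜(ℂ, B), h * m = m * h) ∧ IsUnit h ∧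
      ∃ φ : A →ₙₐ[ℂ] B, Function.Surjective φ ∧
        ∀ a : A, (θ a : 𝓜(ℂ, B)) = h * (φ a : 𝓜(ℂ, B)) := by
  obtain ⟨T, hT, hbij, hprod⟩ := exists_operator θ hsurj hθ
  let e : B ≃L[ℂ] B := ContinuousLinearEquiv.ofBijective T
    (LinearMap.ker_eq_bot.2 hbij.1) (LinearMap.range_eq_top.2 hbij.2)
  have he : ∀ x, T (e.symm x) = x := e.apply_symm_apply
  have he' : ∀ x, e.symm (T x) = x := e.symm_apply_apply
  let J : B →L[ℂ] B := e.symm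
  have hTJ : ∀ x, T (J x) = x := he
  have hJT : ∀ x, J (T x) = x := he'
  have hJ : ∀ x y, J x * y = x * J y := fun x y => by
    rw [← hTJ y, ← hT, hTJ, hJT]
  refine ⟨ofCentral T hT, ofCentral_mul_comm T hT, ?_, ?_⟩
  · refine ⟨⟨ofCentral T hT, ofCentral J hJ, ext_fst hTJ, ext_fst hJT⟩, rfl⟩
  · refine ⟨{ toFun := fun a => J (θ a)
              map_smul' := fun r a => by simp
              map_zero' := by simp
              map_add' := fun a b => by simp
              map_mul' := fun a b => ?_ }, fun x => ?_, fun a => ext_fst fun y => ?_⟩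
    · rw [← map_mul_of_central hJ, ← hJ, ← map_mul_of_central hJ, ← hprod, hJT]
    · obtain ⟨a, ha⟩ := hsurj (T x)
      exact ⟨a, by change J (θ a) = x; rw [ha, hJT]⟩
    · change θ a * y = T (J (θ a) * y)
      rw [map_mul_of_central hT, hTJ]
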